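/- Let m ≥ 2 be even, and decompose the Clifford–Fourier kernel (given by its closed form) as K_−(x,y) = K_0^−(x,y) + Σ_{i<j} e_i e_j K_{ij}^−(x,y) with real scalar-valued functions K_0^−, K_{ij}^−. Then there exists a constant c > 0 such that for all x, y ∈ ℝ^m: |K_0^−(x,y)| ≤ c (1+|x|)^{(m−2)/2}(1+|y|)^{(m−2)/2} and |K_{ij}^−(x,y)| ≤ c (1+|x|)^{(m−2)/2}(1+|y|)^{(m−2)/2} for all i < j. -/

import Mathlib

open scoped BigOperators
open MeasureTheory

noncomputable section

namespace CliffordFourier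

/-- Concrete model of the complexified Clifford algebra `Cl_{0,m} ⊗ ℂ`:
an element is the family of its complex coefficients on the canonical basis
`e_S = e_{i₁} ⋯ e_{i_k}` (for `S = {i₁ < … < i_k} ⊆ {0,…,m-1}`). -/
def Cl (m : ℕ) : Type := Finset (Fin m) → ℂ

variable {m : ℕ}

instance : NormedAddCommGroup (Cl m) :=
  inferInstanceAs (NormedAddCommGroup (Finset (Fin m) → ℂ))
instance : NormedSpace ℝ (Cl m) :=
  inferInstanceAs (NormedSpace ℝ (Finset (Fin m) → ℂ))
instance : Module ℂ (Cl m) := inferInstanceAs (Module ℂ (Finset (Fin m) → ℂ))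
instance : CompleteSpace (Cl m) := inferInstanceAs (CompleteSpace (Finset (Fin m) → ℂ))

/-- The coefficient of `a` on the basis element `e_S`. -/
def coeff (a : Cl m) : Finset (Fin m) → ℂ := a

/-- Build an element of the Clifford algebra from its coefficients. -/
def ofCoeff (f : Finset (Fin m) → ℂ) : Cl m := f

/-- `1 = e_∅`. -/
instance : One (Cl m) := ⟨ofCoeff fun S => if S = (∅ : Finset (Fin m)) then 1 else 0⟩

/-- Clifford multiplication, determined by the relations `e_i e_j = - e_j e_i` (`i ≠ j`)
and `e_i² = -1`; on basis elements it is given by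
`e_T · e_U = (-1)^{#{(t,u) ∈ T×U : u < t}} · (-1)^{#(T∩U)} · e_{T Δ U}`. -/
instance : Mul (Cl m) :=
  ⟨fun a b => ofCoeff fun S => ∑ T : Finset (Fin m),
    ((-1 : ℂ) ^ ((((T ×ˢ (symmDiff T S)).filter fun p : Fin m × Fin m => p.2 < p.1).card)
        + (T ∩ (symmDiff T S)).card))
      * coeff a T * coeff b (symmDiff T S)⟩

/-- The generator `e_i`. -/
def e (m : ℕ) (i : Fin m) : Cl m := ofCoeff fun S => if S = {i} then 1 else 0

/-- The embedding of a vector `x ∈ ℝ^m` as `x = Σ_i x_i e_i` in the Clifford algebra. -/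
def vec (m : ℕ) (x : Fin m → ℝ) : Cl m := ∑ i : Fin m, (x i : ℂ) • e m i

/-- The Euclidean inner product `⟨x,y⟩ = Σ_i x_i y_i`. -/
def ip (x y : Fin m → ℝ) : ℝ := ∑ i, x i * y i

/-- The Euclidean norm `|x|`. -/
def nrm (x : Fin m → ℝ) : ℝ := Real.sqrt (ip x x)

/-- The wedge product `x∧y = Σ_{j<k} e_j e_k (x_j y_k - x_k y_j)`. -/
def wedge (m : ℕ) (x y : Fin m → ℝ) : Cl m :=
  ∑ j : Fin m, ∑ k : Fin m,
    if j < k then ((x j * y k - x k * y j : ℝ) : ℂ) • (e m j * e m k) else 0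

/-- Complex conjugation of the coefficients. -/
def cconj (a : Cl m) : Cl m := ofCoeff fun S => starRingEnd ℂ (coeff a S)

/-- The entire function `J̃_a(t) = t^{-a} J_a(t) = Σ_{j≥0} (-1)^j (t/2)^{2j} / (j! Γ(j+a+1) 2^a)`
(for `t > 0` this is literally `t^{-a} J_a(t)`). -/
def besselJt (a t : ℝ) : ℝ :=
  ∑' j : ℕ, ((-1 : ℝ)^j * (t/2) ^ (2*j)) / (j.factorial * Real.Gamma ((j : ℝ) + a + 1) * (2:ℝ)^a)

/-- `A*_{(m-2)/2}(s,t) = Σ_{ℓ=0}^{⌊m/4-3/4⌋} s^{m/2-2-2ℓ} (1/(2^ℓ ℓ!)) Γ(m/2)/Γ(m/2-2ℓ-1) J̃_{(m-2ℓ-3)/2}(t)`. -/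
def Astar (m : ℕ) (s t : ℝ) : ℝ :=
  ∑ l ∈ Finset.range ((m - 3)/4 + 1),
    s ^ (m/2 - 2 - 2*l) * (1 / ((2:ℝ)^l * (l.factorial : ℝ))) *
      (Real.Gamma ((m:ℝ)/2) / Real.Gamma ((m:ℝ)/2 - 2*l - 1)) *
        besselJt (((m:ℝ) - 2*l - 3)/2) t

/-- `B*_{(m-2)/2}(s,t) = -Σ_{ℓ=0}^{⌊m/4-1/2⌋} s^{m/2-1-2ℓ} (1/(2^ℓ ℓ!)) Γ(m/2)/Γ(m/2-2ℓ) J̃_{(m-2ℓ-3)/2}(t)`. -/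
def Bstar (m : ℕ) (s t : ℝ) : ℝ :=
  -∑ l ∈ Finset.range ((m - 2)/4 + 1),
    s ^ (m/2 - 1 - 2*l) * (1 / ((2:ℝ)^l * (l.factorial : ℝ))) *
      (Real.Gamma ((m:ℝ)/2) / Real.Gamma ((m:ℝ)/2 - 2*l)) *
        besselJt (((m:ℝ) - 2*l - 3)/2) t

/-- `C*_{(m-2)/2}(s,t) = -Σ_{ℓ=0}^{⌊m/4-1/2⌋} s^{m/2-1-2ℓ} (1/(2^ℓ ℓ!)) Γ(m/2)/Γ(m/2-2ℓ) J̃_{(m-2ℓ-1)/2}(t)`. -/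
def Cstar (m : ℕ) (s t : ℝ) : ℝ :=
  -∑ l ∈ Finset.range ((m - 2)/4 + 1),
    s ^ (m/2 - 1 - 2*l) * (1 / ((2:ℝ)^l * (l.factorial : ℝ))) *
      (Real.Gamma ((m:ℝ)/2) / Real.Gamma ((m:ℝ)/2 - 2*l)) *
        besselJt (((m:ℝ) - 2*l - 1)/2) t

/-- The closed form of the Clifford-Fourier kernel for even `m`:
for `m = 2` it is `cos(x₁y₂-x₂y₁) + e₁e₂ sin(x₁y₂-x₂y₁)`, and for even `m > 2` it is
`(-1)^{m/2} (π/2)^{1/2} (A*(s,t) + B*(s,t) + (x∧y) C*(s,t))`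
with `s = ⟨x,y⟩`, `t = √(|x|²|y|² - s²)`. -/
def Kcf (m : ℕ) (x y : Fin m → ℝ) : Cl m :=
  if 2 < m then
    ((-1:ℝ)^(m/2) * Real.sqrt (Real.pi/2)) •
      ((Astar m (ip x y) (Real.sqrt (ip x x * ip y y - ip x y^2))
          + Bstar m (ip x y) (Real.sqrt (ip x x * ip y y - ip x y^2))) • (1 : Cl m)
        + Cstar m (ip x y) (Real.sqrt (ip x x * ip y y - ip x y^2)) • wedge m x y)
  else
    (Real.cos (∑ j : Fin m, ∑ k : Fin m, if j < k then x j * y k - x k * y j else 0)) • (1 : Cl m)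
      + (Real.sin (∑ j : Fin m, ∑ k : Fin m, if j < k then x j * y k - x k * y j else 0)) •
          (∑ j : Fin m, ∑ k : Fin m, if j < k then e m j * e m k else 0)

/-- The `j`-th term of the Bessel series. -/
def bterm (a t : ℝ) (j : ℕ) : ℝ :=
  ((-1 : ℝ)^j * (t/2) ^ (2*j)) / (j.factorial * Real.Gamma ((j : ℝ) + a + 1) * (2:ℝ)^a)

theorem gamma_lower (a : ℝ) (ha : -(1/2) ≤ a) (j : ℕ) :
    Real.Gamma (a + 1) * (1/2)^j ≤ Real.Gamma ((j : ℝ) + a + 1) := by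
  induction j with
  | zero => simp
  | succ j ih =>
    have hj : (0:ℝ) ≤ j := Nat.cast_nonneg j
    have h1 : ((j + 1 : ℕ) : ℝ) + a + 1 = ((j : ℝ) + a + 1) + 1 := by push_cast; ring
    have hp : 0 < Real.Gamma ((j : ℝ) + a + 1) := Real.Gamma_pos_of_pos (by linarith)
    have h3 : (j : ℝ) + a + 1 ≠ 0 := (by linarith : (0:ℝ) < (j : ℝ) + a + 1).ne'
    rw [h1, Real.Gamma_add_one h3, pow_succ]
    nlinarith

theorem bterm_bound (a t : ℝ) (ha : -(1/2) ≤ a) (j : ℕ) :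
    ‖bterm a t j‖ ≤ (1 / (Real.Gamma (a+1) * (2:ℝ)^a)) * ((t^2/2)^j / j.factorial) := by
  have h := gamma_lower a ha j
  have hG : 0 < Real.Gamma (a + 1) := Real.Gamma_pos_of_pos (by linarith)
  have h2 : (0:ℝ) < 2^a := Real.rpow_pos_of_pos (by norm_num) a
  have hf : (0:ℝ) < j.factorial := by exact_mod_cast Nat.factorial_pos j
  have hG' : 0 < Real.Gamma ((j : ℝ) + a + 1) := lt_of_lt_of_le (by positivity) h
  have e1 : ‖bterm a t j‖ = (t^2/4)^j / (j.factorial * Real.Gamma ((j : ℝ) + a + 1) * (2:ℝ)^a) := by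
    unfold bterm
    rw [Real.norm_eq_abs, abs_div, abs_mul, abs_pow, abs_neg, abs_one, one_pow, one_mul, pow_mul,
      abs_of_pos (by positivity : (0:ℝ) < j.factorial * Real.Gamma ((j : ℝ) + a + 1) * (2:ℝ)^a),
      abs_of_nonneg (by positivity)]
    congr 2
    ring
  have e2 : (1 / (Real.Gamma (a+1) * (2:ℝ)^a)) * ((t^2/2)^j / j.factorial)
      = (t^2/4)^j / (j.factorial * (Real.Gamma (a + 1) * (1/2)^j) * (2:ℝ)^a) := by
    have : (t^2/2)^j * (1/2)^j = (t^2/4)^j := by rw [← mul_pow]; congr 1; ring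
    rw [← this]
    field_simp
  rw [e1, e2]
  gcongr

theorem exp_hasSum (u : ℝ) : HasSum (fun j : ℕ => u^j / j.factorial) (Real.exp u) := by
  rw [Real.exp_eq_exp_ℝ]
  exact NormedSpace.expSeries_div_hasSum_exp u

theorem bterm_summable (a t : ℝ) (ha : -(1/2) ≤ a) : Summable (bterm a t) :=
  Summable.of_norm_bounded ((exp_hasSum (t^2/2)).summable.mul_left _) (bterm_bound a t ha)

theorem bessel_hasSum (a t : ℝ) (ha : -(1/2) ≤ a) : HasSum (bterm a t) (besselJt a t) :=
  (bterm_summable a t ha).hasSum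

theorem bessel_small (a : ℝ) (ha : -(1/2) ≤ a) :
    ∃ C, ∀ t, 0 ≤ t → t ≤ 1 → |besselJt a t| ≤ C := by
  have hG : 0 < Real.Gamma (a + 1) := Real.Gamma_pos_of_pos (by linarith)
  have h2 : (0:ℝ) < 2^a := Real.rpow_pos_of_pos (by norm_num) a
  refine ⟨(1 / (Real.Gamma (a+1) * (2:ℝ)^a)) * Real.exp 1, fun t h0 h1 => ?_⟩
  have := tsum_of_norm_bounded ((exp_hasSum (t^2/2)).mul_left (1 / (Real.Gamma (a+1) * (2:ℝ)^a)))
    (bterm_bound a t ha)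
  refine le_trans this ?_
  have : t^2/2 ≤ 1 := by nlinarith
  gcongr

theorem bessel_rec (a t : ℝ) (ha : 1/2 ≤ a) :
    t^2 * besselJt (a+1) t = 2 * a * besselJt a t - besselJt (a-1) t := by
  have h1 := ((bessel_hasSum a t (by linarith)).mul_left (2*a)).sub
    (bessel_hasSum (a-1) t (by linarith))
  have h2 := (bessel_hasSum (a+1) t (by linarith)).mul_left (t^2)
  have key : ∀ j : ℕ, 2 * a * bterm a t j - bterm (a-1) t j = -2 * j * bterm a t j := by
    intro j
    have hj : (0:ℝ) ≤ j := Nat.cast_nonneg j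
    have hG : 0 < Real.Gamma ((j : ℝ) + a) := Real.Gamma_pos_of_pos (by linarith)
    have h2 : (0:ℝ) < 2^a := Real.rpow_pos_of_pos (by norm_num) a
    have hf : (0:ℝ) < j.factorial := by exact_mod_cast Nat.factorial_pos j
    have hja : (0:ℝ) < j + a := by linarith
    unfold bterm
    rw [show (j:ℝ) + (a-1) + 1 = j + a by ring, Real.Gamma_add_one (by linarith),
      Real.rpow_sub_one (by norm_num)]
    field_simp
    ring
  simp_rw [key] at h1
  rw [← hasSum_nat_add_iff' 1] at h1
  have key2 : ∀ j : ℕ, -2 * ((j+1 : ℕ):ℝ) * bterm a t (j+1) = t^2 * bterm (a+1) t j := by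
    intro j
    have hj : (0:ℝ) ≤ j := Nat.cast_nonneg j
    have hG : 0 < Real.Gamma ((j : ℝ) + a + 1 + 1) := Real.Gamma_pos_of_pos (by linarith)
    have h2 : (0:ℝ) < 2^a := Real.rpow_pos_of_pos (by norm_num) a
    have hf : (0:ℝ) < j.factorial := by exact_mod_cast Nat.factorial_pos j
    unfold bterm
    rw [show (j:ℝ) + (a+1) + 1 = j + a + 1 + 1 by ring,
      show ((j+1 : ℕ):ℝ) + a + 1 = j + a + 1 + 1 by push_cast; ring,
      Real.rpow_add_one (by norm_num), Nat.factorial_succ,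
      show 2 * (j+1) = 2*j+2 by ring, pow_add, pow_succ]
    push_cast
    field_simp
    ring
  simp_rw [key2] at h1
  simpa using h2.unique h1

theorem gamma_half (j : ℕ) :
    (j.factorial : ℝ) * Real.Gamma ((j:ℝ) + 1/2) * 4^j = (2*j).factorial * Real.sqrt Real.pi := by
  induction j with
  | zero => simpa using Real.Gamma_one_half_eq
  | succ j ih =>
    rw [show ((j+1 : ℕ):ℝ) + 1/2 = ((j:ℝ) + 1/2) + 1 by push_cast; ring,
      Real.Gamma_add_one (by positivity), Nat.factorial_succ,
      show 2 * (j+1) = 2*j+1+1 by ring, Nat.factorial_succ, Nat.factorial_succ]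
    push_cast
    linear_combination (2 * (j:ℝ) + 2) * (2*j+1) * ih

theorem bessel_neg_half (t : ℝ) :
    besselJt (-(1/2)) t = 1 / (Real.sqrt Real.pi * (2:ℝ)^(-(1/2):ℝ)) * Real.cos t := by
  refine (bessel_hasSum _ t le_rfl).unique ?_
  have key := (Real.hasSum_cos t).mul_left (1 / (Real.sqrt Real.pi * (2:ℝ)^(-(1/2):ℝ)))
  suffices hk : bterm (-(1/2)) t = fun j => 1 / (Real.sqrt Real.pi * (2:ℝ)^(-(1/2):ℝ)) *
      ((-1) ^ j * t ^ (2 * j) / ((2 * j).factorial : ℝ)) by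
    rw [hk]; exact key
  funext j
  have h := gamma_half j
  have h2 : (0:ℝ) < 2^(-(1/2):ℝ) := Real.rpow_pos_of_pos (by norm_num) _
  have hf : (0:ℝ) < (2*j).factorial := by exact_mod_cast Nat.factorial_pos _
  have hs : 0 < Real.sqrt Real.pi := Real.sqrt_pos.mpr Real.pi_pos
  have h' : (j.factorial : ℝ) * Real.Gamma ((j:ℝ) + 1/2) = (2*j).factorial * Real.sqrt Real.pi / 4^j := by
    rw [← h]; field_simp
  unfold bterm
  rw [show (j:ℝ) + -(1/2) + 1 = j + 1/2 by ring, h', div_pow,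
    show (2:ℝ)^(2*j) = 4^j by rw [pow_mul]; norm_num]
  field_simp

theorem bessel_half (t : ℝ) :
    t * besselJt (1/2) t = 2 / (Real.sqrt Real.pi * (2:ℝ)^((1/2):ℝ)) * Real.sin t := by
  refine ((bessel_hasSum _ t (by norm_num)).mul_left t).unique ?_
  convert (Real.hasSum_sin t).mul_left _ using 2 with j
  have h := gamma_half j
  have h2 : (0:ℝ) < 2^((1/2):ℝ) := Real.rpow_pos_of_pos (by norm_num) _
  have hf : (0:ℝ) < (2*j).factorial := by exact_mod_cast Nat.factorial_pos _
  have hs : 0 < Real.sqrt Real.pi := Real.sqrt_pos.mpr Real.pi_pos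
  have h' : (j.factorial : ℝ) * (((j:ℝ) + 1/2) * Real.Gamma ((j:ℝ) + 1/2))
      = ((j:ℝ) + 1/2) * ((2*j).factorial * Real.sqrt Real.pi / 4^j) := by
    rw [← h]; field_simp
  unfold bterm
  rw [Real.Gamma_add_one (by positivity), h', div_pow,
    show (2:ℝ)^(2*j) = 4^j by rw [pow_mul]; norm_num, Nat.factorial_succ, pow_succ]
  push_cast
  field_simp

/-- From boundedness near zero and of `t ^ p * f`, deduce boundedness. -/
theorem combine (f : ℝ → ℝ) (C D : ℝ) (p : ℕ) (hp : 1 ≤ p) (h0 : ∀ t, 0 ≤ t → t ≤ 1 → |f t| ≤ C)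
    (h1 : ∀ t, 0 ≤ t → |t^p * f t| ≤ D) (t : ℝ) (ht : 0 ≤ t) :
    |f t| ≤ max C D ∧ t * |f t| ≤ max C D := by
  rcases le_total t 1 with h | h
  · have := h0 t ht h
    have h3 : |f t| ≤ max C D := this.trans (le_max_left _ _)
    exact ⟨h3, le_trans (mul_le_of_le_one_left (abs_nonneg _) h) h3⟩
  · have := h1 t ht
    rw [abs_mul, abs_of_nonneg (by positivity : 0 ≤ t^p)] at this
    have h2 : t ≤ t^p := le_self_pow₀ h (by omega)
    have h3 : t * |f t| ≤ max C D :=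
      le_trans (mul_le_mul_of_nonneg_right h2 (abs_nonneg _)) (this.trans (le_max_right _ _))
    exact ⟨le_trans (le_mul_of_one_le_left (abs_nonneg _) h) h3, h3⟩

theorem bessel_bdd (k : ℕ) : ∃ C, 0 ≤ C ∧ ∀ t, 0 ≤ t →
    |besselJt ((k:ℝ) - 1/2) t| ≤ C ∧ |besselJt ((k:ℝ) + 1/2) t| ≤ C ∧
      t * |besselJt ((k:ℝ) + 1/2) t| ≤ C := by
  suffices H : ∃ C, ∀ t, 0 ≤ t →
    |besselJt ((k:ℝ) - 1/2) t| ≤ C ∧ |besselJt ((k:ℝ) + 1/2) t| ≤ C ∧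
      t * |besselJt ((k:ℝ) + 1/2) t| ≤ C by
    obtain ⟨C, hC⟩ := H
    exact ⟨C, (abs_nonneg _).trans (hC 0 le_rfl).1, hC⟩
  induction k with
  | zero =>
    obtain ⟨C, hC⟩ := bessel_small (1/2) (by norm_num)
    have hs : 0 < Real.sqrt Real.pi := Real.sqrt_pos.mpr Real.pi_pos
    have hB : ∀ t, 0 ≤ t → |t^1 * besselJt (1/2) t| ≤ 2 / (Real.sqrt Real.pi * (2:ℝ)^((1/2):ℝ)) := by
      intro t _
      rw [pow_one, bessel_half, abs_mul, abs_of_pos (by positivity)]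
      exact mul_le_of_le_one_right (by positivity) (Real.abs_sin_le_one t)
    have hA : ∀ t, |besselJt (-(1/2)) t| ≤ 1 / (Real.sqrt Real.pi * (2:ℝ)^(-(1/2):ℝ)) := by
      intro t
      rw [bessel_neg_half, abs_mul, abs_of_pos (by positivity)]
      exact mul_le_of_le_one_right (by positivity) (Real.abs_cos_le_one t)
    refine ⟨max (1 / (Real.sqrt Real.pi * (2:ℝ)^(-(1/2):ℝ))) (max C (2 / (Real.sqrt Real.pi * (2:ℝ)^((1/2):ℝ)))),
      fun t ht => ?_⟩
    have := combine _ _ _ 1 le_rfl hC hB t ht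
    rw [Nat.cast_zero, zero_sub, zero_add]
    exact ⟨(hA t).trans (le_max_left _ _), this.1.trans (le_max_right _ _),
      this.2.trans (le_max_right _ _)⟩
  | succ k ih =>
    obtain ⟨C, hC⟩ := ih
    obtain ⟨D, hD⟩ := bessel_small ((k:ℝ) + 1/2 + 1) (by linarith [(Nat.cast_nonneg k : (0:ℝ) ≤ k)])
    have hB : ∀ t, 0 ≤ t → |t^2 * besselJt ((k:ℝ) + 1/2 + 1) t| ≤ 2 * ((k:ℝ)+1/2) * C + C := by
      intro t ht
      have hk : (0:ℝ) ≤ k := Nat.cast_nonneg k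
      rw [bessel_rec _ _ (by linarith)]
      refine (abs_sub _ _).trans ?_
      obtain ⟨h1, h2, -⟩ := hC t ht
      rw [abs_mul, abs_of_nonneg (by positivity : 0 ≤ 2 * ((k:ℝ)+1/2)),
        show (k:ℝ) + 1/2 - 1 = k - 1/2 by ring]
      gcongr
    refine ⟨max C (max D (2 * ((k:ℝ)+1/2) * C + C)), fun t ht => ?_⟩
    have := combine _ _ _ 2 (by norm_num) hD hB t ht
    rw [show ((k+1:ℕ):ℝ) - 1/2 = k + 1/2 by push_cast; ring,
      show ((k+1:ℕ):ℝ) + 1/2 = k + 1/2 + 1 by push_cast; ring]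
    exact ⟨(hC t ht).2.1.trans (le_max_left _ _), this.1.trans (le_max_right _ _),
      this.2.trans (le_max_right _ _)⟩

/-- General bound for sums occurring in the kernel. -/
theorem sum_bdd (N n : ℕ) (p : ℕ → ℕ) (q : ℕ → ℝ) (f : ℕ → ℝ → ℝ) (w : ℝ → ℝ)
    (hp : ∀ l ∈ Finset.range N, p l ≤ n)
    (hf : ∀ l ∈ Finset.range N, ∃ C, 0 ≤ C ∧ ∀ t, 0 ≤ t → w t * |f l t| ≤ C)
    (hw : ∀ t, 0 ≤ t → 0 ≤ w t) :
    ∃ C, 0 ≤ C ∧ ∀ s t R, 0 ≤ t → |s| ≤ R → 1 ≤ R →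
      w t * |∑ l ∈ Finset.range N, s ^ p l * q l * f l t| ≤ C * R ^ n := by
  choose! C hC0 hC using hf
  refine ⟨∑ l ∈ Finset.range N, |q l| * C l,
    Finset.sum_nonneg fun l hl => mul_nonneg (abs_nonneg _) (hC0 l hl), fun s t R ht hs hR => ?_⟩
  calc w t * |∑ l ∈ Finset.range N, s ^ p l * q l * f l t|
      ≤ w t * ∑ l ∈ Finset.range N, |s ^ p l * q l * f l t| :=
        mul_le_mul_of_nonneg_left (Finset.abs_sum_le_sum_abs _ _) (hw t ht)
    _ = ∑ l ∈ Finset.range N, |s| ^ p l * (|q l| * (w t * |f l t|)) := by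
        rw [Finset.mul_sum]
        refine Finset.sum_congr rfl fun l _ => ?_
        rw [abs_mul, abs_mul, abs_pow]; ring
    _ ≤ ∑ l ∈ Finset.range N, R ^ n * (|q l| * C l) := by
        refine Finset.sum_le_sum fun l hl => ?_
        have h1 : |s| ^ p l ≤ R ^ n :=
          (pow_le_pow_left₀ (abs_nonneg _) hs _).trans (pow_le_pow_right₀ hR (hp l hl))
        have h2 := hC l hl t ht
        have h3 := hw t ht
        gcongr
    _ = _ := by rw [← Finset.mul_sum]; ring

theorem Astar_bdd (m : ℕ) (hme : Even m) (hm : 2 < m) : ∃ C, 0 ≤ C ∧ ∀ s t R, 0 ≤ t → |s| ≤ R →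
    1 ≤ R → |Astar m s t| ≤ C * R ^ ((m-2)/2) := by
  obtain ⟨n, rfl⟩ := hme
  obtain ⟨C, hC, h⟩ := sum_bdd ((n + n - 3)/4 + 1) ((n+n-2)/2) (fun l => (n+n)/2 - 2 - 2*l)
    (fun l => (1 / ((2:ℝ)^l * (l.factorial : ℝ))) *
      (Real.Gamma (((n+n:ℕ):ℝ)/2) / Real.Gamma (((n+n:ℕ):ℝ)/2 - 2*l - 1)))
    (fun l => besselJt ((((n+n:ℕ):ℝ) - 2*l - 3)/2)) (fun _ => 1) (fun l _ => by omega)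
    (fun l hl => by
      rw [Finset.mem_range] at hl
      obtain ⟨C, h0, h⟩ := bessel_bdd (n-1-l)
      refine ⟨C, h0, fun t ht => ?_⟩
      have e : (((n+n:ℕ):ℝ) - 2*l - 3)/2 = ((n-1-l : ℕ):ℝ) - 1/2 := by
        rw [Nat.cast_sub (by omega), Nat.cast_sub (by omega)]; push_cast; ring
      rw [e, one_mul]
      exact (h t ht).1) (fun _ _ => zero_le_one)
  refine ⟨C, hC, fun s t R ht hs hR => ?_⟩
  have := h s t R ht hs hR
  simp only [one_mul, ← mul_assoc] at this
  exact this

theorem Bstar_bdd (m : ℕ) (hme : Even m) (hm : 2 < m) : ∃ C, 0 ≤ C ∧ ∀ s t R, 0 ≤ t → |s| ≤ R →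
    1 ≤ R → |Bstar m s t| ≤ C * R ^ ((m-2)/2) := by
  obtain ⟨n, rfl⟩ := hme
  obtain ⟨C, hC, h⟩ := sum_bdd ((n + n - 2)/4 + 1) ((n+n-2)/2) (fun l => (n+n)/2 - 1 - 2*l)
    (fun l => (1 / ((2:ℝ)^l * (l.factorial : ℝ))) *
      (Real.Gamma (((n+n:ℕ):ℝ)/2) / Real.Gamma (((n+n:ℕ):ℝ)/2 - 2*l)))
    (fun l => besselJt ((((n+n:ℕ):ℝ) - 2*l - 3)/2)) (fun _ => 1) (fun l _ => by omega)
    (fun l hl => by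
      rw [Finset.mem_range] at hl
      obtain ⟨C, h0, h⟩ := bessel_bdd (n-1-l)
      refine ⟨C, h0, fun t ht => ?_⟩
      have e : (((n+n:ℕ):ℝ) - 2*l - 3)/2 = ((n-1-l : ℕ):ℝ) - 1/2 := by
        rw [Nat.cast_sub (by omega), Nat.cast_sub (by omega)]; push_cast; ring
      rw [e, one_mul]
      exact (h t ht).1) (fun _ _ => zero_le_one)
  refine ⟨C, hC, fun s t R ht hs hR => ?_⟩
  have := h s t R ht hs hR
  simp only [one_mul, ← mul_assoc] at this
  rw [Bstar, abs_neg]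
  exact this

theorem Cstar_bdd (m : ℕ) (hme : Even m) (hm : 2 < m) : ∃ C, 0 ≤ C ∧ ∀ s t R, 0 ≤ t → |s| ≤ R →
    1 ≤ R → t * |Cstar m s t| ≤ C * R ^ ((m-2)/2) := by
  obtain ⟨n, rfl⟩ := hme
  obtain ⟨C, hC, h⟩ := sum_bdd ((n + n - 2)/4 + 1) ((n+n-2)/2) (fun l => (n+n)/2 - 1 - 2*l)
    (fun l => (1 / ((2:ℝ)^l * (l.factorial : ℝ))) *
      (Real.Gamma (((n+n:ℕ):ℝ)/2) / Real.Gamma (((n+n:ℕ):ℝ)/2 - 2*l)))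
    (fun l => besselJt ((((n+n:ℕ):ℝ) - 2*l - 1)/2)) (fun t => t) (fun l _ => by omega)
    (fun l hl => by
      rw [Finset.mem_range] at hl
      obtain ⟨C, h0, h⟩ := bessel_bdd (n-1-l)
      refine ⟨C, h0, fun t ht => ?_⟩
      have e : (((n+n:ℕ):ℝ) - 2*l - 1)/2 = ((n-1-l : ℕ):ℝ) + 1/2 := by
        rw [Nat.cast_sub (by omega), Nat.cast_sub (by omega)]; push_cast; ring
      rw [e]
      exact (h t ht).2.2) (fun _ h => h)
  refine ⟨C, hC, fun s t R ht hs hR => ?_⟩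
  have := h s t R ht hs hR
  simp only [← mul_assoc] at this
  rw [Cstar, abs_neg]
  exact this

theorem ip_self_nonneg {m : ℕ} (x : Fin m → ℝ) : 0 ≤ ip x x :=
  Finset.sum_nonneg fun i _ => mul_self_nonneg _

theorem abs_ip_le {m : ℕ} (x y : Fin m → ℝ) : |ip x y| ≤ nrm x * nrm y := by
  rw [nrm, nrm, ← Real.sqrt_mul (ip_self_nonneg x)]
  apply Real.abs_le_sqrt
  have := Finset.sum_mul_sq_le_sq_mul_sq Finset.univ x y
  simpa [ip, sq] using this

theorem minor_le {m : ℕ} (x y : Fin m → ℝ) (j k : Fin m) (hjk : j < k) :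
    |x j * y k - x k * y j| ≤ Real.sqrt (ip x x * ip y y - ip x y^2) := by
  apply Real.abs_le_sqrt
  have h : 2 * (ip x x * ip y y - ip x y^2) = ∑ a, ∑ b, (x a * y b - x b * y a)^2 := by
    have e : ∀ a b, (x a * y b - x b * y a)^2 = (x a * x a) * (y b * y b) + (y a * y a) * (x b * x b)
      - 2 * ((x a * y a) * (x b * y b)) := fun a b => by ring
    simp_rw [e, Finset.sum_sub_distrib, Finset.sum_add_distrib, ← Finset.mul_sum, ← Finset.sum_mul]
    unfold ip
    ring
  have hnn : ∀ a, 0 ≤ ∑ b, (x a * y b - x b * y a)^2 :=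
    fun a => Finset.sum_nonneg fun b _ => sq_nonneg _
  have h1 : (x j * y k - x k * y j)^2 ≤ ∑ b, (x j * y b - x b * y j)^2 :=
    Finset.single_le_sum (f := fun b => (x j * y b - x b * y j)^2)
      (fun b _ => sq_nonneg _) (Finset.mem_univ k)
  have h2 : (x k * y j - x j * y k)^2 ≤ ∑ b, (x k * y b - x b * y k)^2 :=
    Finset.single_le_sum (f := fun b => (x k * y b - x b * y k)^2)
      (fun b _ => sq_nonneg _) (Finset.mem_univ j)
  have h3 : ∑ a ∈ {j, k}, ∑ b, (x a * y b - x b * y a)^2 ≤ ∑ a, ∑ b, (x a * y b - x b * y a)^2 :=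
    Finset.sum_le_sum_of_subset_of_nonneg (Finset.subset_univ _) (fun a _ _ => hnn a)
  rw [Finset.sum_pair hjk.ne] at h3
  nlinarith

theorem norm_coeff_le {m : ℕ} (a : Cl m) (S : Finset (Fin m)) : ‖coeff a S‖ ≤ ‖a‖ :=
  norm_le_pi_norm (ι := Finset (Fin m)) (G := fun _ => ℂ) a S

theorem cl_norm_le {m : ℕ} (a : Cl m) (r : ℝ) (hr : 0 ≤ r) (h : ∀ S, ‖coeff a S‖ ≤ r) : ‖a‖ ≤ r :=
  (pi_norm_le_iff_of_nonneg (ι := Finset (Fin m)) (G := fun _ => ℂ) (x := a) hr).2 h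

theorem norm_one_le {m : ℕ} : ‖(1 : Cl m)‖ ≤ 1 := by
  refine cl_norm_le _ _ zero_le_one fun S => ?_
  change ‖(if S = (∅ : Finset (Fin m)) then (1:ℂ) else 0)‖ ≤ 1
  split_ifs <;> simp

theorem norm_ee_le {m : ℕ} (j k : Fin m) : ‖e m j * e m k‖ ≤ 1 := by
  refine cl_norm_le _ _ zero_le_one fun S => ?_
  change ‖∑ T : Finset (Fin m),
    ((-1 : ℂ) ^ ((((T ×ˢ (symmDiff T S)).filter fun p : Fin m × Fin m => p.2 < p.1).card)
        + (T ∩ (symmDiff T S)).card))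
      * (if T = {j} then (1:ℂ) else 0) * (if symmDiff T S = {k} then (1:ℂ) else 0)‖ ≤ 1
  rw [Finset.sum_eq_single {j}]
  · rw [norm_mul, norm_mul, norm_pow]
    split_ifs <;> simp
  · intro T _ hT
    simp [hT]
  · simp

theorem norm_csmul_le {m : ℕ} (c : ℝ) (a : Cl m) : ‖(c : ℂ) • a‖ ≤ |c| * ‖a‖ := by
  refine cl_norm_le _ _ (by positivity) fun S => ?_
  change ‖(c:ℂ) * coeff a S‖ ≤ _
  rw [norm_mul, Complex.norm_real, Real.norm_eq_abs]
  exact mul_le_mul_of_nonneg_left (norm_coeff_le a S) (abs_nonneg _)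

theorem norm_dsum_le {m : ℕ} (f : Fin m → Fin m → Cl m) (r : ℝ) (h : ∀ j k, ‖f j k‖ ≤ r) :
    ‖∑ j, ∑ k, f j k‖ ≤ (m:ℝ)^2 * r := by
  refine (norm_sum_le_of_le (f := fun j => ∑ k, f j k) Finset.univ (n := fun _ => (m:ℝ) * r)
    fun j _ => ?_).trans ?_
  · refine (norm_sum_le_of_le Finset.univ (n := fun _ => r) fun k _ => h j k).trans ?_
    simp
  · simp [sq, mul_assoc]

theorem norm_wedge_le {m : ℕ} (x y : Fin m → ℝ) :
    ‖wedge m x y‖ ≤ (m:ℝ)^2 * Real.sqrt (ip x x * ip y y - ip x y^2) := by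
  refine norm_dsum_le _ _ fun j k => ?_
  split_ifs with h
  · refine (norm_csmul_le _ _).trans ?_
    exact (mul_le_of_le_one_right (abs_nonneg _) (norm_ee_le j k)).trans (minor_le x y j k h)
  · simp

theorem Kcf_bdd (m : ℕ) (hme : Even m) (hm : 2 ≤ m) :
    ∃ c : ℝ, 0 < c ∧ ∀ x y : Fin m → ℝ,
      ‖Kcf m x y‖ ≤ c * (1 + nrm x) ^ ((m - 2)/2) * (1 + nrm y) ^ ((m - 2)/2) := by
  by_cases h2 : 2 < m
  · obtain ⟨A, hA0, hA⟩ := Astar_bdd m hme h2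
    obtain ⟨B, hB0, hB⟩ := Bstar_bdd m hme h2
    obtain ⟨C, hC0, hC⟩ := Cstar_bdd m hme h2
    refine ⟨Real.sqrt (Real.pi/2) * (A + B + (m:ℝ)^2 * C) + 1, by positivity, fun x y => ?_⟩
    have hx : 0 ≤ nrm x := Real.sqrt_nonneg _
    have hy : 0 ≤ nrm y := Real.sqrt_nonneg _
    rw [Kcf, if_pos h2, mul_assoc, ← mul_pow]
    have hR : 1 ≤ (1 + nrm x) * (1 + nrm y) := by nlinarith [mul_nonneg hx hy]
    have hs : |ip x y| ≤ (1 + nrm x) * (1 + nrm y) := (abs_ip_le x y).trans (by nlinarith)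
    have hw := norm_wedge_le x y
    have ht : 0 ≤ Real.sqrt (ip x x * ip y y - ip x y^2) := Real.sqrt_nonneg _
    generalize Real.sqrt (ip x x * ip y y - ip x y^2) = t at *
    generalize (1 + nrm x) * (1 + nrm y) = R at *
    have hA := hA _ t R ht hs hR
    have hB := hB _ t R ht hs hR
    have hC := hC _ t R ht hs hR
    have hRp : 0 ≤ R ^ ((m-2)/2) := by positivity
    rw [norm_smul, norm_mul, norm_pow, norm_neg, norm_one, one_pow, one_mul, Real.norm_eq_abs,
      abs_of_nonneg (Real.sqrt_nonneg _)]
    have h1 : ‖(Astar m (ip x y) t + Bstar m (ip x y) t) • (1 : Cl m)‖ ≤ (A + B) * R ^ ((m-2)/2) := by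
      rw [norm_smul, Real.norm_eq_abs]
      refine (mul_le_of_le_one_right (abs_nonneg _) norm_one_le).trans ?_
      refine (abs_add_le _ _).trans ?_
      linarith
    have h3 : ‖Cstar m (ip x y) t • wedge m x y‖ ≤ (m:ℝ)^2 * C * R ^ ((m-2)/2) := by
      rw [norm_smul, Real.norm_eq_abs]
      calc _ ≤ |Cstar m (ip x y) t| * ((m:ℝ)^2 * t) := mul_le_mul_of_nonneg_left hw (abs_nonneg _)
        _ = (m:ℝ)^2 * (t * |Cstar m (ip x y) t|) := by ring
        _ ≤ (m:ℝ)^2 * (C * R ^ ((m-2)/2)) := mul_le_mul_of_nonneg_left hC (by positivity)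
        _ = _ := by ring
    calc _ ≤ Real.sqrt (Real.pi/2) * ((A + B) * R ^ ((m-2)/2) + (m:ℝ)^2 * C * R ^ ((m-2)/2)) :=
          mul_le_mul_of_nonneg_left ((norm_add_le _ _).trans (add_le_add h1 h3)) (Real.sqrt_nonneg _)
      _ ≤ _ := by linarith
  · obtain rfl : m = 2 := by omega
    refine ⟨1 + 2^2 * 1, by norm_num, fun x y => ?_⟩
    rw [Kcf, if_neg h2]
    simp only [Nat.sub_self, Nat.zero_div, pow_zero, mul_one]
    refine (norm_add_le _ _).trans (add_le_add ?_ ?_)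
    · rw [norm_smul]
      exact mul_le_one₀ (Real.abs_cos_le_one _) (norm_nonneg _) norm_one_le
    · rw [norm_smul]
      refine (mul_le_of_le_one_left (norm_nonneg _) (Real.abs_sin_le_one _)).trans ?_
      have := norm_dsum_le (m := 2) (fun j k => if j < k then e 2 j * e 2 k else 0) 1 (fun j k => by
        split_ifs
        · exact norm_ee_le j k
        · simp)
      simpa using this

/-- Decomposing the closed-form Clifford-Fourier kernel for even `m` as
`K_-(x,y) = K_0^-(x,y) + Σ_{i<j} e_i e_j K_{ij}^-(x,y)`, the scalar components satisfy
`|K_0^-(x,y)| ≤ c (1+|x|)^{(m-2)/2} (1+|y|)^{(m-2)/2}` and likewise for `K_{ij}^-`. -/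
theorem kernel_bound (m : ℕ) (hme : Even m) (hm : 2 ≤ m) :
    ∃ c : ℝ, 0 < c ∧ ∀ x y : Fin m → ℝ,
      ‖coeff (Kcf m x y) (∅ : Finset (Fin m))‖
          ≤ c * (1 + nrm x) ^ ((m - 2)/2) * (1 + nrm y) ^ ((m - 2)/2) ∧
      ∀ i j : Fin m, i < j →
        ‖coeff (Kcf m x y) {i, j}‖
          ≤ c * (1 + nrm x) ^ ((m - 2)/2) * (1 + nrm y) ^ ((m - 2)/2) := by
  obtain ⟨c, hc, h⟩ := Kcf_bdd m hme hm
  exact ⟨c, hc, fun x y => ⟨(norm_coeff_le _ _).trans (h x y),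
    fun i j _ => (norm_coeff_le _ _).trans (h x y)⟩⟩

end CliffordFourier
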